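/- arXiv:1410.7724 — 4 statements merged into one kernel-verified Lean document; each statement's English description precedes it below -/
import Mathlib

section
/- Let G=(V,E) be a finite directed graph with a weight function wt: E → Σ into a unital quantale Σ, and let d(u,v) = ⨆_{P: u⇝v} ⊗(P) denote the distance. Let u,v ∈ V and let B ⊆ V be a set of nodes such that every path P: u⇝v in G contains a node of B. Then d(u,v) = ⨆_{z ∈ B} d(u,z) ⊗ d(z,v). -/
/-- `IsPathList E u v p`: the list `p` is the node sequence of a path from `u` to `v`
in the directed graph with edge relation `E`. Nodes may repeat; a single node `u`
(i.e. `p = [u]`) is a path of length 0 from `u` to `u`. A node occurs on the path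
iff it is a member of `p`. -/
def IsPathList {V : Type*} (E : V → V → Prop) (u v : V) (p : List V) : Prop :=
  p.head? = some u ∧ p.getLast? = some v ∧ p.Chain' E

/-- The weight `⊗(P)` of the path with node sequence `p`: the ordered product of the
weights of its edges; the empty product (length-0 path) is `1̄`. -/
def pathWeight {V Q : Type*} [Monoid Q] (wt : V → V → Q) (p : List V) : Q :=
  ((p.zip p.tail).map fun e => wt e.1 e.2).prod

/-- The distance `d(u,v) = ⨆_{P : u ⇝ v} ⊗(P)`, equal to `0̄ = ⊥` if no path exists. -/
noncomputable def pathDist {V Q : Type*} [Monoid Q] [CompleteLattice Q]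
    (E : V → V → Prop) (wt : V → V → Q) (u v : V) : Q :=
  ⨆ p : {p : List V // IsPathList E u v p}, pathWeight wt p.val

/-! Cutting a path `u ⇝ v` at an occurrence of `z`, and conversely gluing a path `u ⇝ z` to a path
`z ⇝ v`, shows that `d(u,z) ⊗ d(z,v)` is the join of the weights of the paths `u ⇝ v` through `z`,
because `⊗` distributes over joins. If every path `u ⇝ v` meets `B`, joining over `z ∈ B` therefore
takes all of them into account. -/

section Paths

variable {V Q : Type*}

theorem isPathList_append_cons {E : V → V → Prop} {u v z : V} {l₁ l₂ : List V} :
    IsPathList E u v (l₁ ++ z :: l₂) ↔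
      IsPathList E u z (l₁ ++ [z]) ∧ IsPathList E z v (z :: l₂) := by
  have head?_eq : (l₁ ++ z :: l₂).head? = (l₁ ++ [z]).head? := by cases l₁ <;> rfl
  have getLast?_eq : (l₁ ++ z :: l₂).getLast? = (z :: l₂).getLast? :=
    List.getLast?_append_cons ..
  constructor
  · rintro ⟨hu, hv, hchain⟩
    obtain ⟨hchain₁, hchain₂⟩ := List.isChain_split.1 hchain
    exact ⟨⟨head?_eq ▸ hu, List.getLast?_concat, hchain₁⟩, rfl, getLast?_eq ▸ hv, hchain₂⟩
  · rintro ⟨⟨hu, -, hchain₁⟩, -, hv, hchain₂⟩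
    exact ⟨head?_eq ▸ hu, getLast?_eq ▸ hv, List.isChain_split.2 ⟨hchain₁, hchain₂⟩⟩

variable [Monoid Q] (wt : V → V → Q)

@[simp]
theorem pathWeight_singleton (a : V) : pathWeight wt [a] = 1 := rfl

@[simp]
theorem pathWeight_cons_cons (a b : V) (l : List V) :
    pathWeight wt (a :: b :: l) = wt a b * pathWeight wt (b :: l) := by
  simp [pathWeight]

theorem pathWeight_append_cons (z : V) (l₂ : List V) :
    ∀ l₁ : List V,
      pathWeight wt (l₁ ++ z :: l₂) = pathWeight wt (l₁ ++ [z]) * pathWeight wt (z :: l₂)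
  | [] => by simp
  | [a] => by simp
  | a :: b :: l => by
    have ih := pathWeight_append_cons z l₂ (b :: l)
    simp only [List.cons_append, pathWeight_cons_cons, mul_assoc] at ih ⊢
    rw [ih]

end Paths

section Distance

variable {V Q : Type*} [Monoid Q] [CompleteLattice Q] {E : V → V → Prop} {wt : V → V → Q} {c : Q}

theorem pathDist_le_iff {u v : V} :
    pathDist E wt u v ≤ c ↔ ∀ p, IsPathList E u v p → pathWeight wt p ≤ c := by
  simp only [pathDist, iSup_le_iff, Subtype.forall]

theorem pathDist_mul_pathDist_le_iff [IsQuantale Q] {u v x y : V} :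
    pathDist E wt u x * pathDist E wt y v ≤ c ↔
      ∀ p, IsPathList E u x p → ∀ q, IsPathList E y v q →
        pathWeight wt p * pathWeight wt q ≤ c := by
  rw [pathDist, Quantale.iSup_mul_distrib]
  simp only [pathDist, Quantale.mul_iSup_distrib, iSup_le_iff, Subtype.forall]

theorem pathDist_mul_pathDist_le_iff_forall_mem [IsQuantale Q] {u v z : V} :
    pathDist E wt u z * pathDist E wt z v ≤ c ↔
      ∀ p, IsPathList E u v p → z ∈ p → pathWeight wt p ≤ c := by
  rw [pathDist_mul_pathDist_le_iff]
  constructor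
  · intro h p hp hz
    obtain ⟨l₁, l₂, rfl⟩ := List.append_of_mem hz
    obtain ⟨hp₁, hp₂⟩ := isPathList_append_cons.1 hp
    exact (pathWeight_append_cons wt z l₂ l₁).trans_le (h _ hp₁ _ hp₂)
  · intro h p hp q hq
    obtain ⟨l₁, rfl⟩ := List.getLast?_eq_some_iff.1 hp.2.1
    obtain ⟨l₂, rfl⟩ := List.head?_eq_some_iff.1 hq.1
    rw [← pathWeight_append_cons]
    exact h _ (isPathList_append_cons.2 ⟨hp, hq⟩) List.mem_append_cons_self

end Distance

theorem stmt5_general {V Q : Type*} [Monoid Q] [CompleteLattice Q] [IsQuantale Q]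
    (E : V → V → Prop) (wt : V → V → Q) (u v : V) (B : Set V)
    (hB : ∀ p : List V, IsPathList E u v p → ∃ z ∈ B, z ∈ p) :
    pathDist E wt u v = ⨆ z ∈ B, pathDist E wt u z * pathDist E wt z v := by
  refine eq_of_forall_ge_iff fun c => ?_
  simp only [pathDist_le_iff, iSup_le_iff, pathDist_mul_pathDist_le_iff_forall_mem]
  constructor
  · intro h z _ p hp _
    exact h p hp
  · intro h p hp
    obtain ⟨z, hzB, hzp⟩ := hB p hp
    exact h z hzB p hp hzp

/-- in a unital quantale, if `B ⊆ V` is such that every path `P : u ⇝ v`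
contains a node of `B`, then `d(u,v) = ⨆_{z ∈ B} d(u,z) ⊗ d(z,v)`. -/
theorem stmt5 {V Q : Type*} [Finite V] [Monoid Q] [CompleteLattice Q] [IsQuantale Q]
    (E : V → V → Prop) (wt : V → V → Q) (u v : V) (B : Set V)
    (hB : ∀ p : List V, IsPathList E u v p → ∃ z ∈ B, z ∈ p) :
    pathDist E wt u v = ⨆ z ∈ B, pathDist E wt u z * pathDist E wt z v :=
  stmt5_general E wt u v B hB
end

section
/- Let G=(V,E) be a finite directed graph with a weight function wt: E → [0,∞] (the extended nonnegative reals), and for a path P define its weight as the sum of wt over its edges (0 for a path of length 0). Define the shortest-path distance d(u,v) as the infimum over all paths P: u⇝v of the weight of P, with d(u,v) = ∞ if no such path exists. If u,v ∈ V and B ⊆ V is a set of nodes such that every path P: u⇝v contains a node of B, then d(u,v) = ⨅_{z ∈ B} (d(u,z) + d(z,v)). -/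
open scoped ENNReal

/-- The weight of the path with node sequence `p`: the sum of the weights of its
edges (`0` for a path of length 0). -/
noncomputable def pathWeightSum {V : Type*} (wt : V → V → ℝ≥0∞) (p : List V) : ℝ≥0∞ :=
  ((p.zip p.tail).map fun e => wt e.1 e.2).sum

/-- The shortest-path distance `d(u,v)`: the infimum over all paths `P : u ⇝ v` of the
weight of `P`, equal to `∞` if no path exists. -/
noncomputable def spDist {V : Type*} (E : V → V → Prop) (wt : V → V → ℝ≥0∞)
    (u v : V) : ℝ≥0∞ :=
  ⨅ p : {p : List V // IsPathList E u v p}, pathWeightSum wt p.val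

/-! Cutting a path at one of its nodes and gluing two paths at a common endpoint are mutually
inverse and preserve total weight. Gluing gives the triangle inequality, hence `≤`; cutting a path
from `u` to `v` at a node of `B` gives `≥`. -/

section Paths

variable {V : Type*} {E : V → V → Prop} {u v z : V} {p : List V}

theorem pathWeightSum_cons_cons (wt : V → V → ℝ≥0∞) (x y : V) (l : List V) :
    pathWeightSum wt (x :: y :: l) = wt x y + pathWeightSum wt (y :: l) := by
  simp [pathWeightSum]

theorem pathWeightSum_append_cons (wt : V → V → ℝ≥0∞) (s : List V) (z : V) (t : List V) :
    pathWeightSum wt (s ++ z :: t) =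
      pathWeightSum wt (s ++ [z]) + pathWeightSum wt (z :: t) := by
  induction s with
  | nil => simp [pathWeightSum]
  | cons x s ih =>
    cases s with
    | nil => simp [pathWeightSum]
    | cons y s =>
      simp only [List.cons_append, pathWeightSum_cons_cons] at ih ⊢
      rw [ih, add_assoc]

theorem isPathList_append_cons_iff {s t : List V} :
    IsPathList E u v (s ++ z :: t) ↔
      IsPathList E u z (s ++ [z]) ∧ IsPathList E z v (z :: t) := by
  have head_eq : (s ++ z :: t).head? = (s ++ [z]).head? := by cases s <;> rfl
  have last_eq : (s ++ z :: t).getLast? = (z :: t).getLast? :=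
    List.getLast?_append_of_ne_nil s (List.cons_ne_nil z t)
  have chain_iff : (s ++ z :: t).IsChain E ↔ (s ++ [z]).IsChain E ∧ (z :: t).IsChain E :=
    List.isChain_split
  constructor
  · rintro ⟨head, last, chain⟩
    obtain ⟨chain_left, chain_right⟩ := chain_iff.1 chain
    exact ⟨⟨head_eq ▸ head, List.getLast?_concat, chain_left⟩, rfl, last_eq ▸ last, chain_right⟩
  · rintro ⟨⟨head, _, chain_left⟩, _, last, chain_right⟩
    exact ⟨head_eq.trans head, last_eq.trans last, chain_iff.2 ⟨chain_left, chain_right⟩⟩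

theorem IsPathList.spDist_le (hp : IsPathList E u v p) (wt : V → V → ℝ≥0∞) :
    spDist E wt u v ≤ pathWeightSum wt p :=
  iInf_le (fun q : {q : List V // IsPathList E u v q} => pathWeightSum wt q.val) ⟨p, hp⟩

theorem spDist_triangle (E : V → V → Prop) (wt : V → V → ℝ≥0∞) (u z v : V) :
    spDist E wt u v ≤ spDist E wt u z + spDist E wt z v := by
  refine ENNReal.le_iInf_add_iInf ?_
  rintro ⟨p, hp⟩ ⟨q, hq⟩
  obtain ⟨s, rfl⟩ := List.getLast?_eq_some_iff.1 hp.2.1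
  obtain ⟨t, rfl⟩ := List.head?_eq_some_iff.1 hq.1
  calc
    spDist E wt u v ≤ pathWeightSum wt (s ++ z :: t) :=
      (isPathList_append_cons_iff.2 ⟨hp, hq⟩).spDist_le wt
    _ = pathWeightSum wt (s ++ [z]) + pathWeightSum wt (z :: t) :=
      pathWeightSum_append_cons wt s z t

theorem IsPathList.spDist_add_spDist_le (hp : IsPathList E u v p) (hz : z ∈ p)
    (wt : V → V → ℝ≥0∞) : spDist E wt u z + spDist E wt z v ≤ pathWeightSum wt p := by
  obtain ⟨s, t, rfl⟩ := List.append_of_mem hz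
  obtain ⟨hs, ht⟩ := isPathList_append_cons_iff.1 hp
  calc
    spDist E wt u z + spDist E wt z v ≤
        pathWeightSum wt (s ++ [z]) + pathWeightSum wt (z :: t) :=
      add_le_add (hs.spDist_le wt) (ht.spDist_le wt)
    _ = pathWeightSum wt (s ++ z :: t) := (pathWeightSum_append_cons wt s z t).symm

end Paths

theorem stmt10_general {V : Type*} (E : V → V → Prop) (wt : V → V → ℝ≥0∞)
    (u v : V) (B : Set V)
    (hB : ∀ p : List V, IsPathList E u v p → ∃ z ∈ B, z ∈ p) :
    spDist E wt u v = ⨅ z ∈ B, spDist E wt u z + spDist E wt z v := by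
  apply le_antisymm
  · exact le_iInf₂ fun z _ => spDist_triangle E wt u z v
  · refine le_iInf fun ⟨p, hp⟩ => ?_
    obtain ⟨z, hzB, hzp⟩ := hB p hp
    exact (iInf₂_le z hzB).trans (hp.spDist_add_spDist_le hzp wt)

/-- if every path `P : u ⇝ v` contains a node of `B`, then
`d(u,v) = ⨅_{z ∈ B} (d(u,z) + d(z,v))`. -/
theorem stmt10 {V : Type*} [Finite V] (E : V → V → Prop) (wt : V → V → ℝ≥0∞)
    (u v : V) (B : Set V)
    (hB : ∀ p : List V, IsPathList E u v p → ∃ z ∈ B, z ∈ p) :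
    spDist E wt u v = ⨅ z ∈ B, spDist E wt u z + spDist E wt z v :=
  stmt10_general E wt u v B hB
end

section
/- There exist constants c_1 and c_2 such that every finite graph G on n ≥ 2 vertices of treewidth t admits a rooted tree decomposition of width at most c_1·(t+1) whose tree is balanced, namely of height at most c_2·log₂ n (every simple path from the root to a bag has length at most c_2·log₂ n). -/
/-- A tree decomposition of the simple graph `G` on `V`, with bags indexed by `ι`. -/
structure SGTreeDecomp (V : Type*) (ι : Type*) (G : SimpleGraph V) where
  /-- the tree on the bags -/
  T : SimpleGraph ι
  isTree : T.IsTree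
  /-- the bags -/
  bag : ι → Set V
  /-- every vertex belongs to some bag -/
  bag_mem : ∀ v : V, ∃ i, v ∈ bag i
  /-- every edge is contained in some bag -/
  bag_adj : ∀ ⦃u v : V⦄, G.Adj u v → ∃ i, u ∈ bag i ∧ v ∈ bag i
  /-- if `k` lies on the (unique) path from `i` to `j` in the tree, then
  `bag i ∩ bag j ⊆ bag k` -/
  bag_sep : ∀ ⦃i j k : ι⦄ (p : T.Walk i j), p.IsPath → k ∈ p.support →
      bag i ∩ bag j ⊆ bag k

/-- The width of a tree decomposition: the maximum bag size minus one. -/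
noncomputable def decompWidth {V : Type} {m : ℕ} {G : SimpleGraph V}
    (td : SGTreeDecomp V (Fin m) G) : ℕ :=
  (Finset.univ.sup fun i : Fin m => (td.bag i).ncard) - 1

/-- The treewidth of `G`: the minimum width over all its tree decompositions. -/
noncomputable def treewidth (V : Type) (G : SimpleGraph V) : ℕ :=
  sInf {w | ∃ m : ℕ, ∃ td : SGTreeDecomp V (Fin m) G, decompWidth td = w}

/-!
Fix a tree decomposition with bags of size at most `k = t + 1`. For every vertex set `A` one of its
bags `X` separates `G` into classes each holding at most half of `A`: map `A` to the nodes of the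
tree and take a centroid. To decompose a vertex set `W` so that a prescribed `S ⊆ W` with at most
`4 * k` vertices lies in the root bag, let `X` be the union of a bag halving `W \ S` and a bag
halving `S`, make `W ∩ (S ∪ X)` the root bag, of size at most `6 * k`, and recurse on every class
together with `X`, prescribing the part of `S ∪ X` that lies in it. The number of vertices outside
the prescribed set halves at every step, so the recursion has logarithmic depth.
-/

section Branches

variable {ι : Type*} {T : SimpleGraph ι} {i j j' x y : ι}

lemma support_subset_of_isAcyclic (hT : T.IsAcyclic) {p : T.Walk x y} (hp : p.IsPath)
    (q : T.Walk x y) : p.support ⊆ q.support := by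
  classical
  have hpq : p = q.bypass :=
    congrArg Subtype.val ((hT.subsingleton_path x y).elim ⟨p, hp⟩ q.toPath)
  exact hpq ▸ q.support_bypass_subset_support

/-- The branch of `T` hanging off `i` through its neighbour `j`: the connected component of `j`
in `T - i`. It is empty when `j` is not a neighbour of `i`. -/
def branch (T : SimpleGraph ι) (i j : ι) : Set ι :=
  {x | T.Adj i j ∧ ∃ p : T.Walk j x, i ∉ p.support}

lemma exists_mem_branch (hT : T.Connected) (hx : x ≠ i) : ∃ j, x ∈ branch T i j := by
  obtain ⟨p, hp⟩ := hT.exists_isPath i x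
  cases p with
  | nil => exact absurd rfl hx
  | cons hadj q => exact ⟨_, hadj, q, ((SimpleGraph.Walk.cons_isPath_iff hadj q).1 hp).2⟩

lemma mem_branch_of_walk (hx : x ∈ branch T i j) (p : T.Walk x y) (hp : i ∉ p.support) :
    y ∈ branch T i j := by
  obtain ⟨hadj, q, hq⟩ := hx
  exact ⟨hadj, q.append p, by simp [SimpleGraph.Walk.mem_support_append_iff, hp, hq]⟩

lemma exists_isPath_snd_eq_of_mem_branch (hx : x ∈ branch T i j) :
    ∃ p : T.Walk i x, p.IsPath ∧ p.snd = j := by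
  classical
  obtain ⟨hadj, q, hq⟩ := hx
  refine ⟨.cons hadj q.bypass, q.bypass_isPath.cons fun h => ?_, by simp⟩
  exact hq (q.support_bypass_subset_support h)

lemma branch_unique (hT : T.IsAcyclic) (hx : x ∈ branch T i j) (hx' : x ∈ branch T i j') :
    j = j' := by
  obtain ⟨p, hp, rfl⟩ := exists_isPath_snd_eq_of_mem_branch hx
  obtain ⟨q, hq, rfl⟩ := exists_isPath_snd_eq_of_mem_branch hx'
  have hpq : p = q := congrArg Subtype.val ((hT.subsingleton_path i x).elim ⟨p, hp⟩ ⟨q, hq⟩)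
  rw [hpq]

lemma disjoint_branch_swap (hT : T.IsAcyclic) : Disjoint (branch T i j) (branch T j i) := by
  rw [Set.disjoint_left]
  rintro x hx ⟨-, q, hq⟩
  obtain ⟨p, hp, rfl⟩ := exists_isPath_snd_eq_of_mem_branch hx
  exact hq (support_subset_of_isAcyclic hT hp q (p.getVert_mem_support 1))

lemma branch_ssubset_branch (hT : T.IsAcyclic) (hij : T.Adj i j) (hne : j' ≠ i) :
    branch T j j' ⊂ branch T i j := by
  classical
  refine (Set.ssubset_iff_of_subset ?_).2
    ⟨j, ⟨hij, .nil, by simpa using hij.ne⟩, fun ⟨_, q, hq⟩ => hq q.end_mem_support⟩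
  rintro x ⟨hjj', q, hq⟩
  refine ⟨hij, .cons hjj' q, fun hi => ?_⟩
  rcases List.mem_cons.1 (SimpleGraph.Walk.support_cons hjj' q ▸ hi) with h | hiq
  · exact hij.ne h
  · have hi : i ∈ branch T j j' :=
      ⟨hjj', q.takeUntil i hiq, fun h => hq (q.support_takeUntil_subset_support hiq h)⟩
    have hi_back : i ∈ branch T j i := ⟨hij.symm, .nil, by simpa using hij.ne'⟩
    exact hne (branch_unique hT hi hi_back)

/-- Otherwise every node has a branch holding more than half of `A`. Take such a heavy branch with
the fewest nodes: the heavy branch at its top node either points back, giving two disjoint heavy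
sets, or is strictly smaller. -/
lemma exists_centroid [Finite ι] (hT : T.IsTree) {α : Type*} {A : Set α} (hA : A.Finite)
    (t : α → ι) : ∃ i, ∀ j, 2 * (A ∩ t ⁻¹' branch T i j).ncard ≤ A.ncard := by
  by_contra! h
  choose next hnext using h
  have hadj (i : ι) : T.Adj i (next i) := by
    have hpos : 0 < (A ∩ t ⁻¹' branch T i (next i)).ncard := by have := hnext i; omega
    obtain ⟨a, -, ha⟩ := (Set.ncard_pos (hA.inter_of_left _)).1 hpos
    exact ha.1
  have := hT.connected.nonempty
  obtain ⟨i, hmin⟩ := Finite.exists_min fun i => (branch T i (next i)).ncard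
  by_cases hback : next (next i) = i
  · have hdisj : Disjoint (A ∩ t ⁻¹' branch T i (next i)) (A ∩ t ⁻¹' branch T (next i) i) :=
      ((disjoint_branch_swap hT.isAcyclic).preimage t).mono
        Set.inter_subset_right Set.inter_subset_right
    have hunion := Set.ncard_union_eq hdisj (hA.inter_of_left _) (hA.inter_of_left _)
    have hle : (A ∩ t ⁻¹' branch T i (next i) ∪ A ∩ t ⁻¹' branch T (next i) i).ncard ≤ A.ncard :=
      Set.ncard_le_ncard (Set.union_subset Set.inter_subset_left Set.inter_subset_left) hA
    have hheavy := hnext i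
    have hheavy' := hnext (next i)
    rw [hback] at hheavy'
    omega
  · exact (hmin (next i)).not_gt
      (Set.ncard_lt_ncard (branch_ssubset_branch hT.isAcyclic (hadj i) hback))

end Branches

section Separators

variable {V κ κ' : Type*} {G : SimpleGraph V} {X Y A : Set V}

/-- The classes of `f` outside `X` are unions of components of `G - X`; the separator `X` is thus
given together with a grouping of these components. -/
def IsSeparation (G : SimpleGraph V) (X : Set V) (f : V → κ) : Prop :=
  ∀ ⦃u v⦄, G.Adj u v → u ∉ X → v ∉ X → f u = f v

/-- No class of `f` outside `X` contains more than half of the vertices of `A`. -/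
def IsBalanced (X : Set V) (f : V → κ) (A : Set V) : Prop :=
  ∀ c, 2 * ((A \ X) ∩ f ⁻¹' {c}).ncard ≤ A.ncard

lemma IsSeparation.prodMk {f : V → κ} {g : V → κ'} (hf : IsSeparation G X f)
    (hg : IsSeparation G Y g) : IsSeparation G (X ∪ Y) fun v => (f v, g v) :=
  fun _ _ huv hu hv => Prod.ext (hf huv (fun h => hu (.inl h)) fun h => hv (.inl h))
    (hg huv (fun h => hu (.inr h)) fun h => hv (.inr h))

lemma IsBalanced.mono [Finite V] {f : V → κ} (p : κ' → κ) {g : V → κ'} (hXY : X ⊆ Y)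
    (hp : ∀ v, p (g v) = f v) (h : IsBalanced X f A) : IsBalanced Y g A := by
  intro c
  have hsub : (A \ Y) ∩ g ⁻¹' {c} ⊆ (A \ X) ∩ f ⁻¹' {p c} := fun v hv =>
    ⟨⟨hv.1.1, fun hX => hv.1.2 (hXY hX)⟩, by rw [Set.mem_preimage, ← hp, hv.2]; rfl⟩
  exact (Nat.mul_le_mul_left 2 (Set.ncard_le_ncard hsub)).trans (h (p c))

lemma exists_isSeparation_isBalanced_pair [Finite V] {k : ℕ}
    (hsep : ∀ A : Set V, ∃ (X : Set V) (f : V → κ),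
      X.ncard ≤ k ∧ IsSeparation G X f ∧ IsBalanced X f A) (A B : Set V) :
    ∃ (X : Set V) (f : V → κ × κ), X.ncard ≤ 2 * k ∧ IsSeparation G X f ∧
      IsBalanced X f A ∧ IsBalanced X f B := by
  obtain ⟨X, f, hX, hf, hfA⟩ := hsep A
  obtain ⟨Y, g, hY, hg, hgB⟩ := hsep B
  refine ⟨X ∪ Y, fun v => (f v, g v), ?_, hf.prodMk hg,
    hfA.mono Prod.fst Set.subset_union_left fun _ => rfl,
    hgB.mono Prod.snd Set.subset_union_right fun _ => rfl⟩
  have := Set.ncard_union_le X Y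
  omega

namespace SGTreeDecomp

variable {ι : Type*}

lemma mem_branch_of_mem_bag (td : SGTreeDecomp V ι G) {i j x y : ι} {v : V} (hi : v ∉ td.bag i)
    (hx : v ∈ td.bag x) (hy : v ∈ td.bag y) (hxj : x ∈ branch td.T i j) :
    y ∈ branch td.T i j := by
  obtain ⟨p, hp⟩ := td.isTree.connected.exists_isPath x y
  exact mem_branch_of_walk hxj p fun h => hi (td.bag_sep p hp h ⟨hx, hy⟩)

theorem exists_balanced_bag [Finite ι] (td : SGTreeDecomp V ι G) {A : Set V} (hA : A.Finite) :
    ∃ (i : ι) (f : V → ι), IsSeparation G (td.bag i) f ∧ IsBalanced (td.bag i) f A := by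
  choose home hhome using td.bag_mem
  obtain ⟨i, hi⟩ := exists_centroid td.isTree hA home
  have hbranch (v : V) : ∃ j, v ∉ td.bag i → home v ∈ branch td.T i j := by
    by_cases hv : v ∈ td.bag i
    · exact ⟨i, fun h => absurd hv h⟩
    · obtain ⟨j, hj⟩ := exists_mem_branch (i := i) td.isTree.connected
        fun h => hv (h ▸ hhome v)
      exact ⟨j, fun _ => hj⟩
  choose f hf using hbranch
  refine ⟨i, f, fun u v huv hu hv => ?_, fun j => ?_⟩
  · obtain ⟨x, hxu, hxv⟩ := td.bag_adj huv
    exact branch_unique td.isTree.isAcyclic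
      (td.mem_branch_of_mem_bag hu (hhome u) hxu (hf u hu))
      (td.mem_branch_of_mem_bag hv (hhome v) hxv (hf v hv))
  · have hsub : (A \ td.bag i) ∩ f ⁻¹' {j} ⊆ A ∩ home ⁻¹' branch td.T i j := by
      rintro v ⟨⟨hvA, hvi⟩, rfl⟩
      exact ⟨hvA, hf v hvi⟩
    exact (Nat.mul_le_mul_left 2 (Set.ncard_le_ncard hsub (hA.inter_of_left _))).trans (hi j)

end SGTreeDecomp

end Separators

section WordDecompositions

variable {V C : Type*} {G : SimpleGraph V} {W X R : Set V} {h : ℕ}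

/-- The class `c` of `f` in `W` together with the separator `X`: the part of `W` that is decomposed
below the child `c` of a node that splits `W` along `X`. -/
def piece (W X : Set V) (f : V → C) (c : C) : Set V :=
  W ∩ (X ∪ f ⁻¹' {c})

lemma IsBalanced.two_mul_ncard_boundary_le [Finite V] {f : V → C} {S : Set V}
    (hf : IsBalanced X f S) (c : C) :
    2 * ((S ∪ X) ∩ piece W X f c).ncard ≤ 2 * X.ncard + S.ncard := by
  have hsub : (S ∪ X) ∩ piece W X f c ⊆ X ∪ (S \ X) ∩ f ⁻¹' {c} := by
    rintro v ⟨hvSX, -, hvXc⟩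
    by_cases hvX : v ∈ X
    · exact .inl hvX
    · exact .inr ⟨⟨hvSX.resolve_right hvX, hvX⟩, hvXc.resolve_left hvX⟩
  have := (Set.ncard_le_ncard hsub).trans (Set.ncard_union_le _ _)
  have := hf c
  omega

lemma IsBalanced.two_mul_ncard_interior_le [Finite V] {f : V → C} {S : Set V}
    (hf : IsBalanced X f (W \ S)) (c : C) :
    2 * (piece W X f c \ (S ∪ X)).ncard ≤ (W \ S).ncard := by
  have hsub : piece W X f c \ (S ∪ X) ⊆ ((W \ S) \ X) ∩ f ⁻¹' {c} :=
    fun v ⟨⟨hvW, hvXc⟩, hv⟩ => ⟨⟨⟨hvW, fun hvS => hv (.inl hvS)⟩, fun hvX => hv (.inr hvX)⟩,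
      hvXc.resolve_left fun hvX => hv (.inr hvX)⟩
  exact (Nat.mul_le_mul_left 2 (Set.ncard_le_ncard hsub)).trans (hf c)

/-- A rooted tree decomposition of `G[W]` of height at most `h`. Its nodes are the words over `C`
of length at most `h`; the root is `[]`, and the parent of a nonempty word drops its last letter.
Nodes with an empty bag are harmless, so the height bound is imposed on nonempty bags only.
The field `connected` says that the nodes holding `v` form a subtree, with topmost node `t`. -/
structure IsWordDecomp (G : SimpleGraph V) (W : Set V) (h : ℕ) (bag : List C → Set V) : Prop where
  length_le : ∀ w, ∀ v ∈ bag w, w.length ≤ h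
  subset : ∀ w, bag w ⊆ W
  adj : ∀ u ∈ W, ∀ v ∈ W, G.Adj u v → ∃ w, u ∈ bag w ∧ v ∈ bag w
  connected : ∀ v ∈ W, ∃ t, v ∈ bag t ∧ ∀ w, v ∈ bag w → w ≠ t → w ≠ [] ∧ v ∈ bag w.dropLast

/-- Hang the families `bag c`, for all letters `c`, below a new root with bag `R`. -/
def joinBags (R : Set V) (bag : C → List C → Set V) : List C → Set V
  | [] => R
  | c :: w => bag c w

lemma isWordDecomp_joinBags_empty : IsWordDecomp G W 0 (joinBags W fun (_ : C) _ => ∅) where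
  length_le
    | [], _, _ => le_rfl
    | _ :: _, _, hv => hv.elim
  subset
    | [] => subset_rfl
    | _ :: _ => Set.empty_subset W
  adj _ hu _ hv _ := ⟨[], hu, hv⟩
  connected _ hv := ⟨[], hv, fun
    | [], _, hne => absurd rfl hne
    | _ :: _, hv, _ => hv.elim⟩

lemma connected_joinBags {f : V → C} {bag : C → List C → Set V} (hXR : W ∩ X ⊆ R)
    (hbag : ∀ c, IsWordDecomp G (piece W X f c) h (bag c))
    (hroot : ∀ c, R ∩ piece W X f c ⊆ bag c []) {v : V} (hvW : v ∈ W) :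
    ∃ t, v ∈ joinBags R bag t ∧
      ∀ w, v ∈ joinBags R bag w → w ≠ t → w ≠ [] ∧ v ∈ joinBags R bag w.dropLast := by
  by_cases hvR : v ∈ R
  · refine ⟨[], hvR, fun w hv hne => ⟨hne, ?_⟩⟩
    match w with
    | [_] => exact hvR
    | c :: d :: w =>
      obtain ⟨t, -, ht⟩ := (hbag c).connected v ((hbag c).subset _ hv)
      have ht_nil : [] = t := by
        by_contra h
        exact (ht [] (hroot c ⟨hvR, (hbag c).subset _ hv⟩) h).1 rfl
      exact (ht (d :: w) hv (by simp [← ht_nil])).2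
  · obtain ⟨t, hvt, ht⟩ := (hbag (f v)).connected v ⟨hvW, .inr rfl⟩
    refine ⟨f v :: t, hvt, fun w hv hne => ?_⟩
    match w with
    | [] => exact absurd hv hvR
    | c :: w =>
      obtain ⟨-, hvX | rfl⟩ := (hbag c).subset _ hv
      · exact absurd (hXR ⟨hvW, hvX⟩) hvR
      · obtain ⟨hw, hv'⟩ := ht w hv fun h => hne (h ▸ rfl)
        refine ⟨by simp, ?_⟩
        rwa [List.dropLast_cons_of_ne_nil hw]

theorem IsWordDecomp.joinBags {f : V → C} {bag : C → List C → Set V}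
    (hf : IsSeparation G X f) (hRW : R ⊆ W) (hXR : W ∩ X ⊆ R)
    (hbag : ∀ c, IsWordDecomp G (piece W X f c) h (bag c))
    (hroot : ∀ c, R ∩ piece W X f c ⊆ bag c []) :
    IsWordDecomp G W (h + 1) (joinBags R bag) where
  length_le
    | [], _, _ => Nat.zero_le _
    | c :: w, v, hv => Nat.succ_le_succ ((hbag c).length_le w v hv)
  subset
    | [] => hRW
    | c :: w => ((hbag c).subset w).trans Set.inter_subset_left
  adj u hu v hv huv := by
    have in_child (c : C) (hu' : u ∈ X ∪ f ⁻¹' {c}) (hv' : v ∈ X ∪ f ⁻¹' {c}) :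
        ∃ w, u ∈ _root_.joinBags R bag w ∧ v ∈ _root_.joinBags R bag w := by
      obtain ⟨w, hw⟩ := (hbag c).adj u ⟨hu, hu'⟩ v ⟨hv, hv'⟩ huv
      exact ⟨c :: w, hw⟩
    by_cases huX : u ∈ X
    · exact in_child (f v) (.inl huX) (.inr rfl)
    by_cases hvX : v ∈ X
    · exact in_child (f u) (.inr rfl) (.inl hvX)
    · exact in_child (f u) (.inr rfl) (.inr (hf huv huX hvX).symm)
  connected _ := connected_joinBags hXR hbag hroot

/-- Requiring `S` inside the root bag makes the recursion glue; halving `S` along with `W \ S`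
keeps the boundary `S` of the recursive calls bounded by `2 * k + 4 * k / 2 = 4 * k`. -/
theorem exists_isWordDecomp [Finite V] {κ : Type*} {k : ℕ}
    (hsep : ∀ A : Set V, ∃ (X : Set V) (f : V → κ),
      X.ncard ≤ k ∧ IsSeparation G X f ∧ IsBalanced X f A) (h : ℕ) {W S : Set V} (hSW : S ⊆ W)
    (hS : S.ncard ≤ 4 * k) (hWS : (W \ S).ncard < 2 ^ h) :
    ∃ bag : List (κ × κ) → Set V,
      IsWordDecomp G W h bag ∧ S ⊆ bag [] ∧ ∀ w, (bag w).ncard ≤ 6 * k := by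
  induction h generalizing W S with
  | zero =>
    have hWS' : W ⊆ S := by
      rwa [pow_zero, Nat.lt_one_iff, Set.ncard_eq_zero, Set.sdiff_eq_empty] at hWS
    refine ⟨joinBags W fun _ _ => ∅, isWordDecomp_joinBags_empty, hSW, ?_⟩
    rintro (_ | ⟨c, w⟩)
    · have := Set.ncard_le_ncard hWS'
      simp only [joinBags]
      omega
    · simp [joinBags]
  | succ h ih =>
    obtain ⟨X, f, hX, hf, hfW, hfS⟩ := exists_isSeparation_isBalanced_pair hsep (W \ S) S
    have hboundary (c) : ((S ∪ X) ∩ piece W X f c).ncard ≤ 4 * k := by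
      have := hfS.two_mul_ncard_boundary_le (W := W) c
      omega
    have hinterior (c) : (piece W X f c \ ((S ∪ X) ∩ piece W X f c)).ncard < 2 ^ h := by
      have := hfW.two_mul_ncard_interior_le c
      rw [Set.sdiff_inter_self_eq_sdiff]
      rw [pow_succ] at hWS
      omega
    choose bag hbag hroot hcard using fun c =>
      ih Set.inter_subset_right (hboundary c) (hinterior c)
    refine ⟨joinBags (W ∩ (S ∪ X)) bag, .joinBags hf Set.inter_subset_left
      (Set.inter_subset_inter_right W Set.subset_union_right) hbag
      (fun c => (Set.inter_subset_inter_left _ Set.inter_subset_right).trans (hroot c)),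
      fun v hv => ⟨hSW hv, .inl hv⟩, ?_⟩
    rintro (_ | ⟨c, w⟩)
    · have := (Set.ncard_le_ncard (Set.inter_subset_right (s := W))).trans (Set.ncard_union_le S X)
      exact this.trans (by omega)
    · exact hcard c w

end WordDecompositions

section ParentGraph

variable {ι : Type*} {par : ι → ι} {depth : ι → ℕ} {r : ι}

/-- The undirected graph of a parent function; a root is encoded as a fixed point of `par`. -/
def parentGraph (par : ι → ι) : SimpleGraph ι :=
  SimpleGraph.fromRel fun a b => par a = b

lemma exists_walk_parentGraph (hdepth : ∀ a, par a ≠ a → depth (par a) < depth a) {A : Set ι}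
    {t : ι} (hA : ∀ a ∈ A, a ≠ t → par a ≠ a ∧ par a ∈ A) {a : ι} (ha : a ∈ A) :
    ∃ p : (parentGraph par).Walk a t, p.length ≤ depth a ∧ ∀ b ∈ p.support, b ∈ A := by
  induction hn : depth a using Nat.strong_induction_on generalizing a with
  | _ n ih =>
    subst hn
    by_cases hat : a = t
    · subst hat
      exact ⟨.nil, Nat.zero_le _, by simpa using ha⟩
    · obtain ⟨hne, hpar⟩ := hA a ha hat
      obtain ⟨p, hlen, hp⟩ := ih _ (hdepth a hne) hpar rfl
      have hadj : (parentGraph par).Adj a (par a) := ⟨hne.symm, .inl rfl⟩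
      refine ⟨.cons hadj p, ?_, by simpa [ha] using hp⟩
      rw [SimpleGraph.Walk.length_cons]
      exact hlen.trans_lt (hdepth a hne)

lemma exists_walk_root_parentGraph (hdepth : ∀ a, par a ≠ a → depth (par a) < depth a)
    (hr : ∀ a, par a = a ↔ a = r) (a : ι) :
    ∃ p : (parentGraph par).Walk a r, p.length ≤ depth a := by
  obtain ⟨p, hlen, -⟩ := exists_walk_parentGraph hdepth (A := Set.univ) (t := r)
    (fun b _ hb => ⟨fun h => hb ((hr b).1 h), trivial⟩) (Set.mem_univ a)
  exact ⟨p, hlen⟩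

lemma dist_root_parentGraph_le (hdepth : ∀ a, par a ≠ a → depth (par a) < depth a)
    (hr : ∀ a, par a = a ↔ a = r) (a : ι) : (parentGraph par).dist r a ≤ depth a := by
  obtain ⟨p, hlen⟩ := exists_walk_root_parentGraph hdepth hr a
  rw [SimpleGraph.dist_comm]
  exact (SimpleGraph.dist_le p).trans hlen

lemma edgeSet_parentGraph_subset :
    (parentGraph par).edgeSet ⊆ (fun a => s(a, par a)) '' {a | par a ≠ a} := by
  intro e
  induction e using Sym2.ind with
  | _ a b =>
    intro hab
    obtain ⟨hne, rfl | rfl⟩ : a ≠ b ∧ (par a = b ∨ par b = a) := hab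
    · exact ⟨a, hne.symm, rfl⟩
    · exact ⟨b, hne, Sym2.eq_swap⟩

lemma isTree_parentGraph [Finite ι] (hdepth : ∀ a, par a ≠ a → depth (par a) < depth a)
    (hr : ∀ a, par a = a ↔ a = r) : (parentGraph par).IsTree := by
  have hconn : (parentGraph par).Connected := by
    rw [SimpleGraph.connected_iff_exists_forall_reachable]
    refine ⟨r, fun a => ?_⟩
    obtain ⟨p, -⟩ := exists_walk_root_parentGraph hdepth hr a
    exact p.reachable.symm
  refine SimpleGraph.isTree_iff_connected_and_card.2
    ⟨hconn, le_antisymm ?_ hconn.card_vert_le_card_edgeSet_add_one⟩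
  have hnonroot : {a | par a ≠ a} = {r}ᶜ := by ext a; simp [hr]
  calc Nat.card (parentGraph par).edgeSet + 1
      ≤ ({r}ᶜ : Set ι).ncard + 1 := by
        rw [Nat.card_coe_set_eq, ← hnonroot]
        exact Nat.succ_le_succ ((Set.ncard_le_ncard edgeSet_parentGraph_subset).trans
          Set.ncard_image_le)
    _ = Nat.card ι := by rw [add_comm, ← Set.ncard_singleton r, Set.ncard_add_ncard_compl]

end ParentGraph

namespace SGTreeDecomp

variable {V ι κ : Type*} {G : SimpleGraph V}

/-- The tree decomposition with the same tree and bags, indexed along a bijection. It brings an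
arbitrary finite index type to the form `Fin m` used by `treewidth`. -/
def reindex (td : SGTreeDecomp V ι G) (e : ι ≃ κ) : SGTreeDecomp V κ G where
  T := td.T.comap e.symm
  isTree := (SimpleGraph.Iso.comap e.symm td.T).isTree_iff.2 td.isTree
  bag := td.bag ∘ e.symm
  bag_mem v := by
    obtain ⟨i, hi⟩ := td.bag_mem v
    exact ⟨e i, by simpa using hi⟩
  bag_adj u v huv := by
    obtain ⟨i, hi⟩ := td.bag_adj huv
    exact ⟨e i, by simpa using hi⟩
  bag_sep i j k p hp hk :=
    td.bag_sep (p.map (SimpleGraph.Hom.comap e.symm td.T)) (hp.map e.symm.injective)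
      (p.support_map _ ▸ List.mem_map_of_mem hk)

lemma dist_reindex_le (td : SGTreeDecomp V ι G) (e : ι ≃ κ) (a b : ι) :
    (td.reindex e).T.dist (e a) (e b) ≤ td.T.dist a b := by
  obtain ⟨p, hp⟩ := td.isTree.connected.exists_walk_length_eq_dist a b
  rw [← hp, ← p.length_map (SimpleGraph.Iso.comap e.symm td.T).symm.toHom]
  exact SimpleGraph.dist_le _

end SGTreeDecomp

/-- The one-bag decomposition; it makes the infimum in `treewidth` attained, not the junk value of
an empty `sInf`. -/
def trivialDecomp {V : Type*} (G : SimpleGraph V) : SGTreeDecomp V (Fin 1) G where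
  T := ⊥
  isTree := .of_subsingleton
  bag _ := Set.univ
  bag_mem _ := ⟨0, trivial⟩
  bag_adj _ _ _ := ⟨0, trivial, trivial⟩
  bag_sep _ _ _ _ _ _ := Set.subset_univ _

lemma exists_decompWidth_eq_treewidth {V : Type} (G : SimpleGraph V) :
    ∃ (m : ℕ) (td : SGTreeDecomp V (Fin m) G), decompWidth td = treewidth V G :=
  Nat.sInf_mem (s := {w | ∃ m : ℕ, ∃ td : SGTreeDecomp V (Fin m) G, decompWidth td = w})
    ⟨_, 1, trivialDecomp G, rfl⟩

lemma ncard_bag_le_decompWidth_add_one {V : Type} {m : ℕ} {G : SimpleGraph V}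
    (td : SGTreeDecomp V (Fin m) G) (i : Fin m) : (td.bag i).ncard ≤ decompWidth td + 1 :=
  (Finset.le_sup (f := fun i => (td.bag i).ncard) (Finset.mem_univ i)).trans
    le_tsub_add

lemma decompWidth_le {V : Type} {m k : ℕ} {G : SimpleGraph V} {td : SGTreeDecomp V (Fin m) G}
    (h : ∀ i, (td.bag i).ncard ≤ k + 1) : decompWidth td ≤ k :=
  Nat.sub_le_of_le_add (Finset.sup_le fun i _ => h i)

section WordNodes

variable {V C : Type*} {G : SimpleGraph V} {h : ℕ}

/-- The nodes of an `IsWordDecomp` of height at most `h`. -/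
abbrev WordNode (C : Type*) (h : ℕ) : Type _ :=
  {w : List C // w.length ≤ h}

/-- The parent function of an `IsWordDecomp`; it fixes the root `[]`. -/
def wordParent (w : WordNode C h) : WordNode C h :=
  ⟨w.1.dropLast, (by simp : w.1.dropLast.length ≤ w.1.length).trans w.2⟩

lemma wordParent_eq_self_iff {w : WordNode C h} : wordParent w = w ↔ w = ⟨[], h.zero_le⟩ := by
  refine ⟨fun hw => Subtype.ext ?_, fun hw => hw ▸ rfl⟩
  have hlen := congrArg List.length (Subtype.ext_iff.1 hw)
  rw [wordParent, List.length_dropLast] at hlen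
  exact List.length_eq_zero_iff.1 (by omega)

lemma length_wordParent_lt (w : WordNode C h) (hw : wordParent w ≠ w) :
    (wordParent w).1.length < w.1.length := by
  have hpos : 0 < w.1.length :=
    List.length_pos_iff.2 fun hnil => hw (wordParent_eq_self_iff.2 (Subtype.ext hnil))
  simpa [wordParent] using hpos

instance WordNode.finite [Finite C] : Finite (WordNode C h) :=
  (List.finite_length_le C h).to_subtype

lemma isTree_wordParent [Finite C] :
    (parentGraph (wordParent (C := C) (h := h))).IsTree :=
  isTree_parentGraph (depth := fun w => w.1.length) (r := ⟨[], h.zero_le⟩)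
    length_wordParent_lt fun _ => wordParent_eq_self_iff

lemma IsWordDecomp.mem_bag_of_mem_support [Finite C] {bag : List C → Set V}
    (hbag : IsWordDecomp G Set.univ h bag) {x y z : WordNode C h}
    {p : (parentGraph wordParent).Walk x y} (hp : p.IsPath) (hz : z ∈ p.support) {v : V}
    (hx : v ∈ bag x.1) (hy : v ∈ bag y.1) : v ∈ bag z.1 := by
  obtain ⟨t, hvt, ht⟩ := hbag.connected v (Set.mem_univ v)
  have walk_to_top {a : WordNode C h} (ha : v ∈ bag a.1) :
      ∃ q : (parentGraph wordParent).Walk a ⟨t, hbag.length_le t v hvt⟩,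
        q.length ≤ a.1.length ∧ ∀ b ∈ q.support, b ∈ {b | v ∈ bag b.1} :=
    exists_walk_parentGraph (depth := fun w => w.1.length) length_wordParent_lt
      (fun b hb hbt => (ht b.1 hb fun h => hbt (Subtype.ext h)).imp_left
        fun hne hw => hne (congrArg Subtype.val (wordParent_eq_self_iff.1 hw))) ha
  obtain ⟨q, -, hq⟩ := walk_to_top hx
  obtain ⟨q', -, hq'⟩ := walk_to_top hy
  have hz' := support_subset_of_isAcyclic isTree_wordParent.isAcyclic hp (q.append q'.reverse) hz
  rw [SimpleGraph.Walk.mem_support_append_iff, SimpleGraph.Walk.support_reverse,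
    List.mem_reverse] at hz'
  exact hz'.elim (hq z) (hq' z)

/-- Forgets the root and keeps the nodes of length at most `h`, which carry all nonempty bags. -/
def IsWordDecomp.toSGTreeDecomp [Finite C] {bag : List C → Set V}
    (hbag : IsWordDecomp G Set.univ h bag) :
    SGTreeDecomp V (WordNode C h) G where
  T := parentGraph wordParent
  isTree := isTree_wordParent
  bag w := bag w.1
  bag_mem v := by
    obtain ⟨t, hvt, -⟩ := hbag.connected v trivial
    exact ⟨⟨t, hbag.length_le t v hvt⟩, hvt⟩
  bag_adj u v huv := by
    obtain ⟨w, hu, hv⟩ := hbag.adj u trivial v trivial huv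
    exact ⟨⟨w, hbag.length_le w u hu⟩, hu, hv⟩
  bag_sep _ _ _ _ hp hk _ hv := hbag.mem_bag_of_mem_support hp hk hv.1 hv.2

theorem IsWordDecomp.exists_sgTreeDecomp [Finite C] {bag : List C → Set V}
    (hbag : IsWordDecomp G Set.univ h bag) :
    ∃ (m : ℕ) (td : SGTreeDecomp V (Fin m) G) (root : Fin m),
      (∀ i, ∃ w, td.bag i = bag w) ∧ ∀ i, td.T.dist root i ≤ h := by
  obtain ⟨m, ⟨e⟩⟩ := Finite.exists_equiv_fin (WordNode C h)
  refine ⟨m, hbag.toSGTreeDecomp.reindex e, e ⟨[], h.zero_le⟩, fun i => ⟨(e.symm i).1, rfl⟩,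
    e.forall_congr_right.1 fun w => ?_⟩
  calc _ ≤ (parentGraph wordParent).dist ⟨[], h.zero_le⟩ w :=
        hbag.toSGTreeDecomp.dist_reindex_le e _ _
    _ ≤ w.1.length := dist_root_parentGraph_le (depth := fun w => w.1.length)
        length_wordParent_lt (fun _ => wordParent_eq_self_iff) w
    _ ≤ h := w.2

end WordNodes

theorem SGTreeDecomp.exists_balanced {V ι : Type*} [Finite V] [Finite ι] {G : SimpleGraph V}
    (td : SGTreeDecomp V ι G) {k : ℕ} (hk : ∀ i, (td.bag i).ncard ≤ k) :
    ∃ (m : ℕ) (td' : SGTreeDecomp V (Fin m) G) (root : Fin m),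
      (∀ i, (td'.bag i).ncard ≤ 6 * k) ∧
      ∀ i, td'.T.dist root i ≤ Nat.log 2 (Nat.card V) + 1 := by
  have hsep (A : Set V) : ∃ (X : Set V) (f : V → ι),
      X.ncard ≤ k ∧ IsSeparation G X f ∧ IsBalanced X f A := by
    obtain ⟨i, f, hf, hfA⟩ := td.exists_balanced_bag A.toFinite
    exact ⟨td.bag i, f, hk i, hf, hfA⟩
  have hcard : (Set.univ \ ∅ : Set V).ncard < 2 ^ (Nat.log 2 (Nat.card V) + 1) := by
    rw [Set.sdiff_empty, Set.ncard_univ]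
    exact Nat.lt_pow_succ_log_self one_lt_two _
  obtain ⟨bag, hbag, -, hle⟩ :=
    exists_isWordDecomp hsep _ (Set.empty_subset Set.univ) (by simp) hcard
  obtain ⟨m, td', root, hbag', hdist⟩ := hbag.exists_sgTreeDecomp
  refine ⟨m, td', root, fun i => ?_, hdist⟩
  obtain ⟨w, hw⟩ := hbag' i
  exact hw ▸ hle w

/-- there are constants `c₁, c₂` such that every finite graph on
`n ≥ 2` vertices of treewidth `t` admits a rooted tree decomposition of width at most
`c₁·(t+1)` that is balanced: every bag is at tree distance at most `c₂·log₂ n` from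
the root (in a tree, the unique simple path from the root to a bag has length equal
to this distance). -/
theorem stmt12 :
    ∃ c₁ c₂ : ℕ, ∀ (V : Type) [Fintype V] (G : SimpleGraph V),
      2 ≤ Fintype.card V →
      ∃ (m : ℕ) (td : SGTreeDecomp V (Fin m) G) (root : Fin m),
        decompWidth td ≤ c₁ * (treewidth V G + 1) ∧
        ∀ i : Fin m, td.T.dist root i ≤ c₂ * Nat.log 2 (Fintype.card V) := by
  refine ⟨6, 2, fun V _ G hn => ?_⟩
  obtain ⟨m₀, td, htd⟩ := exists_decompWidth_eq_treewidth G
  obtain ⟨m, td', root, hbag, hdist⟩ :=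
    td.exists_balanced fun i => htd ▸ ncard_bag_le_decompWidth_add_one td i
  refine ⟨m, td', root, decompWidth_le fun i => (hbag i).trans (Nat.le_succ _), fun i => ?_⟩
  have hlog : 0 < Nat.log 2 (Fintype.card V) := Nat.log_pos one_lt_two hn
  have := hdist i
  rw [Nat.card_eq_fintype_card] at this
  omega
end

section
/- Let A = {A_1,…,A_k} be a single-entry single-exit recursive state machine over the tropical semiring ([0,∞], min, +, ∞, 0), i.e., with nonnegative edge weights, where k is the number of CSMs. Then for all nodes u,v belonging to the same CSM, the (unbounded) configuration distance between the empty-stack configurations equals the bounded-height distance with height bound k: d((u,∅),(v,∅)) = d((u,∅),(v,∅), k). Equivalently, with nonnegative weights the same-context distance is realized (as an infimum) by execution paths that carry at most k boxes on the stack at any time. -/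
/-!
A path between empty-stack configurations matches every call with its return, so it is a path
inside one CSM in which each call is replaced by a complete traversal of the called CSM. If a
traversal of `A_j` contains a nested traversal of `A_j`, then, since weights are nonnegative, the
inner one is at most as heavy and can replace the outer one. An innermost one makes no call of
`A_j`, so each level of nesting removes one CSM from those that may still be called, and the stack
never exceeds `k`.
-/

open scoped ENNReal

/-- The nodes of a component state machine (CSM) with internal nodes drawn from `N`
and boxes drawn from `B`: internal nodes, the unique entry `En`, the unique exit `Ex`,
the call nodes `(En_{Y(b)}, b)` and the return nodes `(Ex_{Y(b)}, b)`. -/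
inductive CNode (N B : Type*) : Type _
  | internal (x : N)
  | entry
  | exit
  | call (b : B)
  | ret (b : B)

/-- Nodes allowed as sources of internal edges: `N ∪ {En} ∪ R`. -/
def CNode.IsSrc {N B : Type*} : CNode N B → Prop
  | .internal _ => True
  | .entry => True
  | .ret _ => True
  | _ => False

/-- Nodes allowed as targets of internal edges: `N ∪ {Ex} ∪ C`. -/
def CNode.IsTgt {N B : Type*} : CNode N B → Prop
  | .internal _ => True
  | .exit => True
  | .call _ => True
  | _ => False

/-- A single-entry single-exit recursive state machine with `k` component state
machines (CSMs) and edge weights in `Q`.  CSM `i` has internal nodes `N i`,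
boxes `Box i` mapped to CSM indices by `Y i`, internal edges `E i` (from
`N ∪ {En} ∪ R` to `N ∪ {Ex} ∪ C`) weighted by `wt i`. -/
structure RSM (k : ℕ) (Q : Type*) where
  /-- internal nodes of each CSM -/
  N : Fin k → Type
  /-- boxes of each CSM -/
  Box : Fin k → Type
  nFinite : ∀ i, Finite (N i)
  boxFinite : ∀ i, Finite (Box i)
  /-- each box corresponds to a CSM -/
  Y : ∀ i, Box i → Fin k
  /-- internal edges -/
  E : ∀ i, CNode (N i) (Box i) → CNode (N i) (Box i) → Prop
  /-- weights of the internal edges -/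
  wt : ∀ i, CNode (N i) (Box i) → CNode (N i) (Box i) → Q
  E_src : ∀ i u v, E i u v → u.IsSrc
  E_tgt : ∀ i u v, E i u v → v.IsTgt

/-- A configuration of an RSM: a node of some CSM together with a stack, a finite
sequence of boxes. Its stack height is the length of the stack. -/
structure Config {k : ℕ} {Q : Type*} (R : RSM k Q) where
  /-- the index of the CSM of the current node -/
  i : Fin k
  /-- the current node -/
  node : CNode (R.N i) (R.Box i)
  /-- the stack of boxes -/
  stack : List (Σ j : Fin k, R.Box j)

/-- The labeled global edges between configurations: internal edges (staying in the
same CSM, targeting an internal node), entry edges (pushing the called box), and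
return edges (popping the box `b`, ending at the return node `(Ex, b)`). -/
inductive GEdge {k : ℕ} {Q : Type*} (R : RSM k Q) : Config R → Q → Config R → Prop
  | internal {i : Fin k} {v₁ : CNode (R.N i) (R.Box i)} {x : R.N i}
      (L : List (Σ j : Fin k, R.Box j)) (h : R.E i v₁ (.internal x)) :
      GEdge R ⟨i, v₁, L⟩ (R.wt i v₁ (.internal x)) ⟨i, .internal x, L⟩
  | entry {i : Fin k} {v₁ : CNode (R.N i) (R.Box i)} {b : R.Box i}
      (L : List (Σ j : Fin k, R.Box j)) (h : R.E i v₁ (.call b)) :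
      GEdge R ⟨i, v₁, L⟩ (R.wt i v₁ (.call b)) ⟨R.Y i b, .entry, L ++ [⟨i, b⟩]⟩
  | ret {i : Fin k} {v₁ : CNode (R.N i) (R.Box i)} {j : Fin k} {b : R.Box j}
      (L : List (Σ j : Fin k, R.Box j)) (h : R.E i v₁ .exit) (hY : R.Y j b = i) :
      GEdge R ⟨i, v₁, L ++ [⟨j, b⟩]⟩ (R.wt i v₁ .exit) ⟨j, .ret b, L⟩

/-- `ExecT R c c' w h`: over the tropical semiring, there is an execution path from
`c` to `c'` of weight `w` (the sum of the labels of its global edges, `0` for the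
empty sum) all of whose configurations have stack height at most `h`. -/
inductive ExecT {k : ℕ} (R : RSM k ℝ≥0∞) : Config R → Config R → ℝ≥0∞ → ℕ → Prop
  | refl (c : Config R) (h : ℕ) (hc : c.stack.length ≤ h) : ExecT R c c 0 h
  | tail {c c' c'' : Config R} {w σ : ℝ≥0∞} {h : ℕ} (hp : ExecT R c c' w h)
      (he : GEdge R c' σ c'') (hc : c''.stack.length ≤ h) : ExecT R c c'' (w + σ) h

/-- The bounded-height configuration distance `d(c, c', h)`: the infimum of the
weights of all execution paths from `c` to `c'` of stack height at most `h`
(`∞` if none exists). -/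
noncomputable def tdistB {k : ℕ} (R : RSM k ℝ≥0∞) (c c' : Config R) (h : ℕ) : ℝ≥0∞ :=
  sInf {w | ExecT R c c' w h}

/-- The configuration distance `d(c, c')`: the infimum of the weights of all
execution paths from `c` to `c'`, with no restriction on the stack height
(`∞` if none exists). -/
noncomputable def tdist {k : ℕ} (R : RSM k ℝ≥0∞) (c c' : Config R) : ℝ≥0∞ :=
  sInf {w | ∃ h : ℕ, ExecT R c c' w h}

/-- A balanced (same-context) execution path inside CSM `i`: every call is matched by its return,
and at every level of nesting only CSMs in `S` are called. The last argument is the weight. Stacks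
are left out, since such a path can be run on top of any stack. -/
inductive BalancedPath {k : ℕ} {Q : Type*} [AddMonoid Q] (R : RSM k Q) (S : Finset (Fin k)) :
    ∀ i : Fin k, CNode (R.N i) (R.Box i) → CNode (R.N i) (R.Box i) → Q → Prop
  | refl (i : Fin k) (u : CNode (R.N i) (R.Box i)) : BalancedPath R S i u u 0
  | internal {i : Fin k} {u v : CNode (R.N i) (R.Box i)} {w : Q} {x : R.N i}
      (hp : BalancedPath R S i u v w) (he : R.E i v (.internal x)) :
      BalancedPath R S i u (.internal x) (w + R.wt i v (.internal x))
  | call {i : Fin k} {u v : CNode (R.N i) (R.Box i)} {w w' : Q} {b : R.Box i}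
      {t : CNode (R.N (R.Y i b)) (R.Box (R.Y i b))}
      (hp : BalancedPath R S i u v w) (he : R.E i v (.call b)) (hS : R.Y i b ∈ S)
      (hb : BalancedPath R S (R.Y i b) .entry t w') (hx : R.E (R.Y i b) t .exit) :
      BalancedPath R S i u (.ret b) (w + (R.wt i v (.call b) + (w' + R.wt (R.Y i b) t .exit)))

/-- A traversal of CSM `j` of weight `w`, from its entry to its exit, calling only CSMs in `S`.
The last edge is kept apart because a global edge into the exit leads directly to the return node
of the caller. -/
def Traversal {k : ℕ} {Q : Type*} [AddMonoid Q] (R : RSM k Q) (S : Finset (Fin k)) (j : Fin k)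
    (w : Q) : Prop :=
  ∃ t w₀, BalancedPath R S j .entry t w₀ ∧ R.E j t .exit ∧ w₀ + R.wt j t .exit = w

/-- A path from `u₀` in CSM `i₀` with empty stack, cut at its pending calls (those that have not
returned yet) into balanced paths. The list is the current stack with its top box first. -/
inductive CallChain {k : ℕ} {Q : Type*} [AddMonoid Q] (R : RSM k Q) (i₀ : Fin k)
    (u₀ : CNode (R.N i₀) (R.Box i₀)) :
    List (Σ j : Fin k, R.Box j) → ∀ i : Fin k, CNode (R.N i) (R.Box i) → Q → Prop
  | base {v : CNode (R.N i₀) (R.Box i₀)} {w : Q} (h : BalancedPath R Finset.univ i₀ u₀ v w) :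
      CallChain R i₀ u₀ [] i₀ v w
  | push {L : List (Σ j : Fin k, R.Box j)} {i : Fin k} {v : CNode (R.N i) (R.Box i)} {w w' : Q}
      {b : R.Box i} {t : CNode (R.N (R.Y i b)) (R.Box (R.Y i b))}
      (hp : CallChain R i₀ u₀ L i v w) (he : R.E i v (.call b))
      (h : BalancedPath R Finset.univ (R.Y i b) .entry t w') :
      CallChain R i₀ u₀ (⟨i, b⟩ :: L) (R.Y i b) t (w + R.wt i v (.call b) + w')

section AddMonoid

variable {k : ℕ} {Q : Type*} [AddMonoid Q] {R : RSM k Q}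

theorem BalancedPath.trans {S : Finset (Fin k)} {i : Fin k} {u v t : CNode (R.N i) (R.Box i)}
    {w w' : Q} (h₁ : BalancedPath R S i u v w) (h₂ : BalancedPath R S i v t w') :
    BalancedPath R S i u t (w + w') := by
  induction h₂ with
  | refl => simpa only [add_zero] using h₁
  | internal _ he ih => simpa only [add_assoc] using (ih h₁).internal he
  | call _ he hS hb hx ih _ => simpa only [add_assoc] using (ih h₁).call he hS hb hx

theorem CallChain.append_balancedPath {i₀ : Fin k} {u₀ : CNode (R.N i₀) (R.Box i₀)}
    {L : List (Σ j : Fin k, R.Box j)} {i : Fin k} {v v' : CNode (R.N i) (R.Box i)} {w w' : Q}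
    (h : CallChain R i₀ u₀ L i v w) (hB : BalancedPath R Finset.univ i v v' w') :
    CallChain R i₀ u₀ L i v' (w + w') := by
  cases h with
  | base h => exact .base (h.trans hB)
  | push hp he h => simpa only [add_assoc] using hp.push he (h.trans hB)

theorem CallChain.append_gEdge {i₀ : Fin k} {u₀ : CNode (R.N i₀) (R.Box i₀)} {c c' : Config R}
    {w σ : Q} (h : CallChain R i₀ u₀ c.stack.reverse c.i c.node w) (he : GEdge R c σ c') :
    CallChain R i₀ u₀ c'.stack.reverse c'.i c'.node (w + σ) := by
  cases he with
  | internal L he =>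
    simpa only [zero_add] using h.append_balancedPath ((BalancedPath.refl _ _).internal he)
  | entry L he =>
    simpa only [List.reverse_concat, add_zero] using h.push he (.refl _ _)
  | ret L hx _ =>
    rw [List.reverse_concat] at h
    cases h with
    | push hp he hB =>
      simpa only [add_assoc, zero_add] using
        hp.append_balancedPath ((BalancedPath.refl _ _).call he (Finset.mem_univ _) hB hx)

variable [Preorder Q] [CanonicallyOrderedAdd Q]

theorem BalancedPath.erase_or_exists_traversal_le {S : Finset (Fin k)} {i : Fin k}
    {u v : CNode (R.N i) (R.Box i)} {w : Q} (h : BalancedPath R S i u v w) (j : Fin k) :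
    BalancedPath R (S.erase j) i u v w ∨ ∃ w' ≤ w, Traversal R (S.erase j) j w' := by
  induction h with
  | refl i u => exact .inl (.refl i u)
  | internal _ he ih =>
    rcases ih with h | ⟨w', hw', hT⟩
    · exact .inl (h.internal he)
    · exact .inr ⟨w', hw'.trans le_self_add, hT⟩
  | @call i _ v w w₀ b t _ he hS _ hx ih ih_body =>
    have traversal_le : w₀ + R.wt (R.Y i b) t .exit ≤
        w + (R.wt i v (.call b) + (w₀ + R.wt (R.Y i b) t .exit)) :=
      le_add_self.trans le_add_self
    rcases ih with h | ⟨w', hw', hT⟩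
    · rcases ih_body with h_body | ⟨w', hw', hT⟩
      · by_cases hj : R.Y i b = j
        · subst hj
          exact .inr ⟨_, traversal_le, t, w₀, h_body, hx, rfl⟩
        · exact .inl (h.call he (Finset.mem_erase.2 ⟨hj, hS⟩) h_body hx)
      · exact .inr ⟨w', (hw'.trans le_self_add).trans traversal_le, hT⟩
    · exact .inr ⟨w', hw'.trans le_self_add, hT⟩

theorem Traversal.exists_le_erase {S : Finset (Fin k)} {j : Fin k} {w : Q}
    (h : Traversal R S j w) : ∃ w' ≤ w, Traversal R (S.erase j) j w' := by
  obtain ⟨t, w₀, hB, hx, rfl⟩ := h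
  rcases hB.erase_or_exists_traversal_le j with hB' | ⟨w', hw', hT⟩
  · exact ⟨_, le_rfl, t, w₀, hB', hx, rfl⟩
  · exact ⟨w', hw'.trans le_self_add, hT⟩

end AddMonoid

section Tropical

variable {k : ℕ} {R : RSM k ℝ≥0∞}

theorem ExecT.trans {c c' c'' : Config R} {w w' : ℝ≥0∞} {h : ℕ} (h₁ : ExecT R c c' w h)
    (h₂ : ExecT R c' c'' w' h) : ExecT R c c'' (w + w') h := by
  induction h₂ with
  | refl => simpa only [add_zero] using h₁
  | tail _ he hc ih => simpa only [add_assoc] using (ih h₁).tail he hc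

theorem ExecT.call {c : Config R} {i : Fin k} {v : CNode (R.N i) (R.Box i)} {b : R.Box i}
    {t : CNode (R.N (R.Y i b)) (R.Box (R.Y i b))} {L : List (Σ j : Fin k, R.Box j)}
    {w w' : ℝ≥0∞} {h : ℕ} (hp : ExecT R c ⟨i, v, L⟩ w h) (he : R.E i v (.call b))
    (hL : L.length < h)
    (hb : ExecT R ⟨R.Y i b, .entry, L ++ [⟨i, b⟩]⟩ ⟨R.Y i b, t, L ++ [⟨i, b⟩]⟩ w' h)
    (hx : R.E (R.Y i b) t .exit) :
    ExecT R c ⟨i, .ret b, L⟩ (w + (R.wt i v (.call b) + (w' + R.wt (R.Y i b) t .exit))) h := by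
  have h_entry := hp.tail (.entry L he) (by simpa using hL)
  simpa only [add_assoc] using (h_entry.trans hb).tail (.ret L hx rfl) hL.le

theorem BalancedPath.exists_execT_le {S : Finset (Fin k)} {i : Fin k}
    {u v : CNode (R.N i) (R.Box i)} {w : ℝ≥0∞} (hB : BalancedPath R S i u v w)
    (L : List (Σ j : Fin k, R.Box j)) :
    ∃ w' ≤ w, ExecT R ⟨i, u, L⟩ ⟨i, v, L⟩ w' (L.length + S.card) := by
  induction S using Finset.strongInduction generalizing i u v w L with
  | H S ih_S =>
    induction hB generalizing L with
    | refl i u => exact ⟨0, le_rfl, .refl _ _ (Nat.le_add_right _ _)⟩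
    | internal _ he ih =>
      obtain ⟨w', hw', hE⟩ := ih L
      exact ⟨_, add_le_add_left hw' _, hE.tail (.internal L he) (Nat.le_add_right _ _)⟩
    | @call i _ _ _ w₀ b t _ he hS hb hx ih _ =>
      obtain ⟨w₁, hw₁, hE₁⟩ := ih L
      have hT : Traversal R S (R.Y i b) (w₀ + R.wt _ t .exit) := ⟨t, w₀, hb, hx, rfl⟩
      obtain ⟨_, hle, t', w₂, hB₂, hx₂, rfl⟩ := hT.exists_le_erase
      obtain ⟨w₃, hw₃, hE₃⟩ := ih_S _ (Finset.erase_ssubset hS) hB₂ (L ++ [⟨i, b⟩])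
      have height_eq : L.length + 1 + (S.erase (R.Y i b)).card = L.length + S.card := by
        rw [add_assoc, add_comm 1, Finset.card_erase_add_one hS]
      have hL : L.length < L.length + S.card :=
        Nat.lt_add_of_pos_right (Finset.card_pos.2 ⟨R.Y i b, hS⟩)
      rw [List.length_append, List.length_singleton, height_eq] at hE₃
      have traversal_le : w₃ + R.wt _ t' .exit ≤ w₀ + R.wt _ t .exit :=
        (add_le_add_left hw₃ _).trans hle
      exact ⟨_, add_le_add hw₁ (add_le_add_right traversal_le _), hE₁.call he hL hE₃ hx₂⟩

theorem ExecT.callChain {i : Fin k} {u : CNode (R.N i) (R.Box i)} {c : Config R} {w : ℝ≥0∞}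
    {h : ℕ} (hE : ExecT R ⟨i, u, []⟩ c w h) :
    CallChain R i u c.stack.reverse c.i c.node w := by
  induction hE with
  | refl => exact .base (.refl i u)
  | tail _ he _ ih => exact ih.append_gEdge he

theorem ExecT.balancedPath {i : Fin k} {u v : CNode (R.N i) (R.Box i)} {w : ℝ≥0∞} {h : ℕ}
    (hE : ExecT R ⟨i, u, []⟩ ⟨i, v, []⟩ w h) : BalancedPath R Finset.univ i u v w := by
  cases hE.callChain with
  | base hB => exact hB

theorem ExecT.exists_le_bounded_height {i : Fin k} {u v : CNode (R.N i) (R.Box i)} {w : ℝ≥0∞}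
    {h : ℕ} (hE : ExecT R ⟨i, u, []⟩ ⟨i, v, []⟩ w h) :
    ∃ w' ≤ w, ExecT R ⟨i, u, []⟩ ⟨i, v, []⟩ w' k := by
  simpa using hE.balancedPath.exists_execT_le []

theorem tdist_le_tdistB (c c' : Config R) (h : ℕ) : tdist R c c' ≤ tdistB R c c' h :=
  sInf_le_sInf fun _ hw => ⟨h, hw⟩

end Tropical

/-- for an RSM with `k` CSMs over the tropical semiring
`([0,∞], min, +, ∞, 0)`, for all nodes `u, v` of the same CSM, the unbounded
same-context configuration distance equals the bounded-height distance with height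
bound `k`: `d((u,∅),(v,∅)) = d((u,∅),(v,∅),k)`. -/
theorem stmt15 {k : ℕ} (R : RSM k ℝ≥0∞) (i : Fin k)
    (u v : CNode (R.N i) (R.Box i)) :
    tdist R ⟨i, u, []⟩ ⟨i, v, []⟩ = tdistB R ⟨i, u, []⟩ ⟨i, v, []⟩ k := by
  refine (tdist_le_tdistB _ _ k).antisymm (le_sInf ?_)
  rintro w ⟨h, hE⟩
  obtain ⟨w', hw', hE'⟩ := hE.exists_le_bounded_height
  exact sInf_le_of_le hE' hw'
end
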